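/- Let V : ℝ → ℝ be Borel measurable, locally integrable and nonnegative almost everywhere. Then for every k ≥ 1 the infimal k-partition energy of the real line satisfies Δ*_k(ℝ) ≤ Σ_V; equivalently, for every real λ > Σ_V there exists a k-partition P of ℝ with energy Δ(P) ≤ λ. (This is the paper's Theorem 1.2 for the metric graph G = ℝ.) -/

import Mathlib

open MeasureTheory Set Filter Topology
open scoped ENNReal

/-- Rayleigh quotient of a test function `f` for the Schrödinger form with potential `V`. -/
noncomputable def rayleigh (V : ℝ → ℝ) (f : ℝ → ℝ) : ℝ :=
  (∫ x, ((deriv f x) ^ 2 + V x * (f x) ^ 2)) / (∫ x, (f x) ^ 2)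

/-- `f` is an admissible test function for the closed set `S`: continuously differentiable,
not identically zero, with compact support contained in `S`. -/
def TestFor (S : Set ℝ) (f : ℝ → ℝ) : Prop :=
  ContDiff ℝ 1 f ∧ f ≠ 0 ∧ HasCompactSupport f ∧ tsupport f ⊆ S

/-- Dirichlet ground state energy `λ_V(S)`, with `sInf ∅ = ∞`. -/
noncomputable def lambdaV (V : ℝ → ℝ) (S : Set ℝ) : ℝ≥0∞ :=
  sInf {e : ℝ≥0∞ | ∃ f : ℝ → ℝ, TestFor S f ∧ e = ENNReal.ofReal (rayleigh V f)}

/-- `Σ_V`, the infimum of the essential spectrum of `-d²/dx² + V` on `ℝ`, characterized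
Persson-style as `sup_{R>0} λ_V({|x| ≥ R})`. -/
noncomputable def SigmaV (V : ℝ → ℝ) : ℝ≥0∞ :=
  ⨆ R : ℝ, ⨆ _ : 0 < R, lambdaV V {x : ℝ | R ≤ |x|}

/-- A `k`-partition of `ℝ`: `k` closed connected subsets with nonempty interior whose
pairwise intersections are contained in both frontiers. -/
def IsPartitionR (k : ℕ) (G : Fin k → Set ℝ) : Prop :=
  (∀ i, IsClosed (G i)) ∧ (∀ i, IsConnected (G i)) ∧
    (∀ i, (interior (G i)).Nonempty) ∧
    ∀ i j, i ≠ j → G i ∩ G j ⊆ frontier (G i) ∩ frontier (G j)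

/-- The energy `Δ(P)` of a partition: the maximum of the ground state energies. -/
noncomputable def energyR (V : ℝ → ℝ) {k : ℕ} (G : Fin k → Set ℝ) : ℝ≥0∞ :=
  ⨆ i, lambdaV V (G i)

/-- The infimal `k`-partition energy `Δ*_k(ℝ)`. -/
noncomputable def optEnergyR (V : ℝ → ℝ) (k : ℕ) : ℝ≥0∞ :=
  ⨅ G : {G : Fin k → Set ℝ // IsPartitionR k G}, energyR V G.1

/-! A test function supported in `{x | R ≤ |x|}` vanishes near the origin, so cutting it at `0`
yields two test functions on the two half-lines. The quadratic form of `-d²/dx² + V - c` is additive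
under this cut, so if it is negative on the whole function it is negative on one of the halves.
Hence for `c > Σ_V` there are compact intervals arbitrarily far out whose ground state energy is
below `c`, and `k` pairwise disjoint ones form a `k`-partition. -/

section Indicator

variable {X M : Type*} [TopologicalSpace X] [Zero M] {f : X → M} {s : Set X} {x : X}

theorem indicator_eventuallyEq_self (hfs : Disjoint (tsupport f) (frontier s)) (hx : x ∈ s) :
    s.indicator f =ᶠ[𝓝 x] f := by
  by_cases hxf : x ∈ tsupport f
  · have hs : s ∈ 𝓝 x := mem_interior_iff_mem_nhds.mp <| by
      by_contra hxs
      exact hfs.notMem_of_mem_left hxf ⟨subset_closure hx, hxs⟩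
    filter_upwards [hs] with y hy using indicator_of_mem hy f
  · filter_upwards [notMem_tsupport_iff_eventuallyEq.mp hxf] with y hy
    rw [indicator_apply_eq_self]
    exact fun _ => hy

theorem indicator_eventuallyEq_zero (hfs : Disjoint (tsupport f) (frontier s)) (hx : x ∉ s) :
    s.indicator f =ᶠ[𝓝 x] 0 := by
  rw [← frontier_compl] at hfs
  filter_upwards [indicator_eventuallyEq_self hfs hx] with y hy
  by_cases hys : y ∈ s
  · rw [indicator_of_mem hys, ← hy, indicator_of_notMem (notMem_compl_iff.mpr hys), Pi.zero_apply]
  · exact indicator_of_notMem hys f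

theorem tsupport_indicator_of_disjoint_frontier (hfs : Disjoint (tsupport f) (frontier s)) :
    tsupport (s.indicator f) = tsupport f ∩ s := by
  ext x
  by_cases hx : x ∈ s
  · have h := indicator_eventuallyEq_self hfs hx
    simp only [mem_inter_iff, hx, and_true]
    rw [← not_iff_not, notMem_tsupport_iff_eventuallyEq, notMem_tsupport_iff_eventuallyEq]
    exact ⟨h.symm.trans, h.trans⟩
  · have h := notMem_tsupport_iff_eventuallyEq.mpr (indicator_eventuallyEq_zero hfs hx)
    simp only [h, mem_inter_iff, hx, and_false]

end Indicator

theorem contDiff_indicator_of_disjoint_frontier {𝕜 E F : Type*} [NontriviallyNormedField 𝕜]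
    [NormedAddCommGroup E] [NormedSpace 𝕜 E] [NormedAddCommGroup F] [NormedSpace 𝕜 F]
    {n : WithTop ℕ∞} {f : E → F} {s : Set E} (hf : ContDiff 𝕜 n f)
    (hfs : Disjoint (tsupport f) (frontier s)) : ContDiff 𝕜 n (s.indicator f) := by
  refine contDiff_iff_contDiffAt.mpr fun x => ?_
  by_cases hx : x ∈ s
  · exact hf.contDiffAt.congr_of_eventuallyEq (indicator_eventuallyEq_self hfs hx)
  · exact contDiff_zero_fun.contDiffAt.congr_of_eventuallyEq (indicator_eventuallyEq_zero hfs hx)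

theorem deriv_indicator_of_disjoint_frontier {𝕜 F : Type*} [NontriviallyNormedField 𝕜]
    [NormedAddCommGroup F] [NormedSpace 𝕜 F] {f : 𝕜 → F} {s : Set 𝕜}
    (hfs : Disjoint (tsupport f) (frontier s)) :
    deriv (s.indicator f) = s.indicator (deriv f) := by
  ext x
  by_cases hx : x ∈ s
  · rw [(indicator_eventuallyEq_self hfs hx).deriv_eq, indicator_of_mem hx]
  · rw [(indicator_eventuallyEq_zero hfs hx).deriv_eq, indicator_of_notMem hx, deriv_zero,
      Pi.zero_apply]

theorem exists_seq_isCompact_pairwise_disjoint {X : Type*} [TopologicalSpace X] {p : Set X → Prop}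
    (h : ∀ K, IsCompact K → ∃ L, IsCompact L ∧ p L ∧ Disjoint K L) :
    ∃ G : ℕ → Set X, (∀ n, IsCompact (G n) ∧ p (G n)) ∧
      Pairwise fun m n => Disjoint (G m) (G n) := by
  refine exists_seq_of_forall_finset_exists' (fun L => IsCompact L ∧ p L) Disjoint fun F hF => ?_
  obtain ⟨L, hL, hpL, hdisj⟩ := h (⋃ K ∈ F, K) (F.isCompact_biUnion fun K hK => (hF K hK).1)
  exact ⟨L, ⟨hL, hpL⟩, fun K hK => hdisj.mono_left (subset_biUnion_of_mem (u := id) hK)⟩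

/-- The quadratic form of the Schrödinger operator `-d²/dx² + V`, the numerator of `rayleigh V`. -/
noncomputable def schrodingerForm (V f : ℝ → ℝ) : ℝ :=
  ∫ x, ((deriv f x) ^ 2 + V x * (f x) ^ 2)

section Form

variable {V f : ℝ → ℝ} {s : Set ℝ}

theorem hasCompactSupport_sq (hc : HasCompactSupport f) : HasCompactSupport fun x => (f x) ^ 2 :=
  hc.comp_left (g := fun y : ℝ => y ^ 2) (zero_pow two_ne_zero)

theorem integrable_sq_of_hasCompactSupport (hf : Continuous f) (hc : HasCompactSupport f) :
    Integrable fun x => (f x) ^ 2 :=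
  (hf.pow 2).integrable_of_hasCompactSupport (hasCompactSupport_sq hc)

theorem integrable_schrodingerForm (hV : LocallyIntegrable V) (hf : ContDiff ℝ 1 f)
    (hc : HasCompactSupport f) : Integrable fun x => (deriv f x) ^ 2 + V x * (f x) ^ 2 := by
  have hVf : Integrable fun x => (f x) ^ 2 • V x :=
    hV.integrable_smul_left_of_hasCompactSupport (hf.continuous.pow 2)
      (hasCompactSupport_sq hc)
  simp only [smul_eq_mul, mul_comm _ (V _)] at hVf
  exact (integrable_sq_of_hasCompactSupport (hf.continuous_deriv le_rfl) hc.deriv).add hVf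

theorem schrodingerForm_zero : schrodingerForm V 0 = 0 := by
  simp [schrodingerForm]

theorem schrodingerForm_sub_const (hV : LocallyIntegrable V) (hf : ContDiff ℝ 1 f)
    (hc : HasCompactSupport f) (c : ℝ) :
    schrodingerForm (fun x => V x - c) f = schrodingerForm V f - c * ∫ x, (f x) ^ 2 := by
  rw [schrodingerForm, schrodingerForm, ← integral_const_mul, ← integral_sub
    (integrable_schrodingerForm hV hf hc)
    ((integrable_sq_of_hasCompactSupport hf.continuous hc).const_mul c)]
  congr! 2 with x
  ring

theorem schrodingerForm_indicator (hs : MeasurableSet s)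
    (hfs : Disjoint (tsupport f) (frontier s)) :
    schrodingerForm V (s.indicator f) = ∫ x in s, ((deriv f x) ^ 2 + V x * (f x) ^ 2) := by
  rw [schrodingerForm, deriv_indicator_of_disjoint_frontier hfs, ← integral_indicator hs]
  refine integral_congr_ae (Eventually.of_forall fun x => ?_)
  by_cases hx : x ∈ s <;> simp [hx]

theorem schrodingerForm_indicator_add_compl (hV : LocallyIntegrable V) (hf : ContDiff ℝ 1 f)
    (hc : HasCompactSupport f) (hs : MeasurableSet s)
    (hfs : Disjoint (tsupport f) (frontier s)) :
    schrodingerForm V (s.indicator f) + schrodingerForm V (sᶜ.indicator f) =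
      schrodingerForm V f := by
  rw [schrodingerForm_indicator hs hfs,
    schrodingerForm_indicator hs.compl (by rwa [frontier_compl]),
    integral_add_compl hs (integrable_schrodingerForm hV hf hc), schrodingerForm]

end Form

namespace TestFor

variable {V f : ℝ → ℝ} {S S' T : Set ℝ}

theorem mono (hf : TestFor S f) (hS : S ⊆ S') : TestFor S' f :=
  ⟨hf.1, hf.2.1, hf.2.2.1, hf.2.2.2.trans hS⟩

theorem integral_sq_pos (hf : TestFor S f) : 0 < ∫ x, (f x) ^ 2 := by
  obtain ⟨hcont, hne, hc, -⟩ := hf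
  obtain ⟨x, hx⟩ := Function.ne_iff.mp hne
  exact (hcont.continuous.pow 2).integral_pos_of_hasCompactSupport_nonneg_nonzero
    (hasCompactSupport_sq hc) (fun y => sq_nonneg _) (pow_ne_zero 2 hx)

theorem rayleigh_lt_iff (hV : LocallyIntegrable V) (hf : TestFor S f) {c : ℝ} :
    rayleigh V f < c ↔ schrodingerForm (fun x => V x - c) f < 0 := by
  rw [schrodingerForm_sub_const hV hf.1 hf.2.2.1, sub_neg, ← div_lt_iff₀ hf.integral_sq_pos]
  rfl

theorem indicator (hf : TestFor S f) (hST : Disjoint S (frontier T))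
    (hneg : schrodingerForm V (T.indicator f) < 0) : TestFor (S ∩ T) (T.indicator f) := by
  obtain ⟨hcont, -, hc, hsupp⟩ := hf
  have hfT : Disjoint (tsupport f) (frontier T) := hST.mono_left hsupp
  have htsupp := tsupport_indicator_of_disjoint_frontier hfT
  refine ⟨contDiff_indicator_of_disjoint_frontier hcont hfT, ?_, ?_, ?_⟩
  · intro hzero
    exact hneg.ne (by rw [hzero, schrodingerForm_zero])
  · exact hc.of_isClosed_subset (isClosed_tsupport _) (htsupp.trans_subset inter_subset_left)
  · exact htsupp.trans_subset (inter_subset_inter_left T hsupp)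

end TestFor

section GroundState

variable {V : ℝ → ℝ} {S S' T : Set ℝ}

theorem lambdaV_le_rayleigh {f : ℝ → ℝ} (hf : TestFor S f) :
    lambdaV V S ≤ ENNReal.ofReal (rayleigh V f) :=
  sInf_le ⟨f, hf, rfl⟩

theorem lambdaV_anti (hS : S ⊆ S') : lambdaV V S' ≤ lambdaV V S := by
  refine le_sInf ?_
  rintro _ ⟨f, hf, rfl⟩
  exact lambdaV_le_rayleigh (hf.mono hS)

theorem interior_nonempty_of_lambdaV_ne_top (h : lambdaV V S ≠ ∞) : (interior S).Nonempty := by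
  obtain ⟨_, ⟨f, ⟨hcont, hne, -, hsupp⟩, rfl⟩, -⟩ := sInf_lt_iff.mp h.lt_top
  exact (Function.support_nonempty_iff.mpr hne).mono <|
    interior_maximal ((subset_tsupport f).trans hsupp) hcont.continuous.isOpen_support

theorem lambdaV_lt_ofReal_iff (hV : LocallyIntegrable V) {c : ℝ} (hc : 0 < c) :
    lambdaV V S < ENNReal.ofReal c ↔
      ∃ f, TestFor S f ∧ schrodingerForm (fun x => V x - c) f < 0 := by
  constructor
  · intro h
    obtain ⟨_, ⟨f, hf, rfl⟩, hlt⟩ := sInf_lt_iff.mp h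
    exact ⟨f, hf, (hf.rayleigh_lt_iff hV).mp ((ENNReal.ofReal_lt_ofReal_iff hc).mp hlt)⟩
  · rintro ⟨f, hf, hneg⟩
    exact (lambdaV_le_rayleigh hf).trans_lt
      ((ENNReal.ofReal_lt_ofReal_iff hc).mpr ((hf.rayleigh_lt_iff hV).mpr hneg))

theorem lambdaV_eq_iInf_inter_closedBall :
    lambdaV V S = ⨅ r : ℝ, lambdaV V (S ∩ Metric.closedBall 0 r) := by
  refine le_antisymm (le_iInf fun r => lambdaV_anti inter_subset_left) (le_sInf ?_)
  rintro _ ⟨f, ⟨hcont, hne, hc, hsupp⟩, rfl⟩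
  obtain ⟨r, hr⟩ := hc.isCompact.isBounded.subset_closedBall (0 : ℝ)
  exact iInf_le_of_le r (lambdaV_le_rayleigh ⟨hcont, hne, hc, subset_inter hsupp hr⟩)

theorem lambdaV_eq_min_of_disjoint_frontier (hV : LocallyIntegrable V) (hT : MeasurableSet T)
    (hST : Disjoint S (frontier T)) :
    lambdaV V S = min (lambdaV V (S ∩ T)) (lambdaV V (S ∩ Tᶜ)) := by
  refine le_antisymm (le_min (lambdaV_anti inter_subset_left) (lambdaV_anti inter_subset_left))
    (le_of_forall_gt fun e he => ?_)
  obtain ⟨c, -, hSc, hce⟩ := ENNReal.lt_iff_exists_real_btwn.mp he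
  have hc : 0 < c := ENNReal.ofReal_pos.mp (bot_le.trans_lt hSc)
  refine lt_trans ?_ hce
  rw [min_lt_iff, lambdaV_lt_ofReal_iff hV hc, lambdaV_lt_ofReal_iff hV hc]
  obtain ⟨f, hf, hneg⟩ := (lambdaV_lt_ofReal_iff hV hc).mp hSc
  have hVc : LocallyIntegrable fun x => V x - c := hV.sub (locallyIntegrable_const c)
  rw [← schrodingerForm_indicator_add_compl hVc hf.1 hf.2.2.1 hT (hST.mono_left hf.2.2.2)] at hneg
  rcases lt_or_lt_of_add_lt_add (hneg.trans_eq (add_zero 0).symm) with hneg | hneg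
  · exact Or.inl ⟨_, hf.indicator hST hneg, hneg⟩
  · exact Or.inr ⟨_, hf.indicator (by rwa [frontier_compl]) hneg, hneg⟩

end GroundState

section Exterior

variable {V : ℝ → ℝ} {e : ℝ≥0∞}

theorem exists_Icc_of_lambdaV_exterior_lt (hV : LocallyIntegrable V) {R : ℝ} (hR : 0 < R)
    (h : lambdaV V {x : ℝ | R ≤ |x|} < e) :
    ∃ a b, Icc a b ⊆ {x : ℝ | R ≤ |x|} ∧ lambdaV V (Icc a b) < e := by
  rw [lambdaV_eq_iInf_inter_closedBall, iInf_lt_iff] at h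
  obtain ⟨r, hr⟩ := h
  have hzero : Disjoint ({x : ℝ | R ≤ |x|} ∩ Metric.closedBall 0 r) (frontier (Ioi 0)) := by
    simp [hR]
  rw [lambdaV_eq_min_of_disjoint_frontier hV measurableSet_Ioi hzero, min_lt_iff] at hr
  rcases hr with hpos | hneg
  · refine ⟨R, r, fun x hx => hx.1.trans (le_abs_self x), (lambdaV_anti ?_).trans_lt hpos⟩
    rintro x ⟨⟨hRx : R ≤ |x|, hxr⟩, hx : 0 < x⟩
    rw [mem_closedBall_zero_iff, Real.norm_of_nonneg hx.le] at hxr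
    rw [abs_of_pos hx] at hRx
    exact ⟨hRx, hxr⟩
  · refine ⟨-r, -R, fun x hx => (le_neg.mpr hx.2).trans (neg_le_abs x),
      (lambdaV_anti ?_).trans_lt hneg⟩
    rintro x ⟨⟨hRx : R ≤ |x|, hxr⟩, hx⟩
    have hx : x ≤ 0 := not_lt.mp hx
    rw [mem_closedBall_zero_iff, Real.norm_of_nonpos hx] at hxr
    rw [abs_of_nonpos hx] at hRx
    exact ⟨neg_le.mp hxr, le_neg.mp hRx⟩

theorem exists_Icc_disjoint_of_SigmaV_lt (hV : LocallyIntegrable V) (h : SigmaV V < e)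
    {K : Set ℝ} (hK : IsCompact K) :
    ∃ a b, lambdaV V (Icc a b) < e ∧ Disjoint K (Icc a b) := by
  obtain ⟨R, hR, hKR⟩ := hK.isBounded.subset_ball_lt 0 (0 : ℝ)
  have hext : lambdaV V {x : ℝ | R ≤ |x|} < e :=
    (le_iSup₂ (f := fun (R : ℝ) (_ : 0 < R) => lambdaV V {x : ℝ | R ≤ |x|}) R hR).trans_lt h
  obtain ⟨a, b, hab, hlt⟩ := exists_Icc_of_lambdaV_exterior_lt hV hR hext
  refine ⟨a, b, hlt, Set.disjoint_left.mpr fun x hxK hx => ?_⟩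
  have hxR : |x| < R := mem_ball_zero_iff.mp (hKR hxK)
  exact hxR.not_ge (hab hx)

end Exterior

theorem optEnergyR_le_of_pairwise_disjoint {V : ℝ → ℝ} {e : ℝ≥0∞} {k : ℕ} {G : Fin k → Set ℝ}
    (hclosed : ∀ i, IsClosed (G i)) (hconn : ∀ i, IsPreconnected (G i))
    (hlt : ∀ i, lambdaV V (G i) < e) (hdisj : Pairwise fun m n => Disjoint (G m) (G n)) :
    optEnergyR V k ≤ e := by
  have hint : ∀ i, (interior (G i)).Nonempty := fun i =>
    interior_nonempty_of_lambdaV_ne_top (hlt i).ne_top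
  have hG : IsPartitionR k G :=
    ⟨hclosed, fun i => ⟨(hint i).mono interior_subset, hconn i⟩, hint,
      fun i j hij => (hdisj hij).inter_eq.trans_subset (empty_subset _)⟩
  exact (iInf_le _ ⟨G, hG⟩).trans (iSup_le fun i => (hlt i).le)

theorem optEnergy_le_sigma_general {V : ℝ → ℝ} (hV : LocallyIntegrable V) (k : ℕ) :
    optEnergyR V k ≤ SigmaV V := by
  refine le_of_forall_gt_imp_ge_of_dense fun e he => ?_
  have hfar (K : Set ℝ) (hK : IsCompact K) :
      ∃ L, IsCompact L ∧ (IsPreconnected L ∧ lambdaV V L < e) ∧ Disjoint K L := by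
    obtain ⟨a, b, hlt, hKab⟩ := exists_Icc_disjoint_of_SigmaV_lt hV he hK
    exact ⟨Icc a b, isCompact_Icc, ⟨isPreconnected_Icc, hlt⟩, hKab⟩
  obtain ⟨G, hG, hdisj⟩ := exists_seq_isCompact_pairwise_disjoint hfar
  exact optEnergyR_le_of_pairwise_disjoint (G := fun i : Fin k => G i)
    (fun i => (hG i).1.isClosed) (fun i => (hG i).2.1) (fun i => (hG i).2.2)
    (hdisj.comp_of_injective Fin.val_injective)

/-- **Theorem 1.2 for `G = ℝ`.** For every `k ≥ 1`, the infimal `k`-partition energy of the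
real line is at most the infimum of the essential spectrum: `Δ*_k(ℝ) ≤ Σ_V`. -/
theorem optEnergy_le_sigma (V : ℝ → ℝ) (hmeas : Measurable V)
    (hloc : LocallyIntegrable V) (hpos : ∀ᵐ x ∂(volume : Measure ℝ), 0 ≤ V x) :
    ∀ k : ℕ, 1 ≤ k → optEnergyR V k ≤ SigmaV V := by
  exact fun k _ => optEnergy_le_sigma_general hloc k
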